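/- arXiv:1704.01817 — 2 statements merged into one kernel-verified Lean document; each statement's English description precedes it below -/
import Mathlib

section
/- Local zeta functional equation for the positive definite case (the case V = ℝ^{n,0} of Theorem 4.1, restricted to the strip where both zeta integrals converge absolutely): Let n ≥ 1, let f : ℝⁿ → ℂ be a Schwartz function, and let s ∈ ℂ with −n/2 < Re(s) < 0. Then both integrals below converge absolutely and ∫_{ℝⁿ} 𝓕f(ξ) · ‖ξ‖^{2s} dξ = π^{−2s−n/2} · ( Γ(s + n/2) / Γ(−s) ) · ∫_{ℝⁿ} f(x) · ‖x‖^{−2s−n} dx, where ‖·‖ is the Euclidean norm. -/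
noncomputable section

open MeasureTheory Real

/-- The Fourier transform `𝓕f(ξ) = ∫ e^{−2πi⟨x,ξ⟩} f(x) dx` on `ℝⁿ`. -/
def fourierTr {n : ℕ} (f : EuclideanSpace ℝ (Fin n) → ℂ) (ξ : EuclideanSpace ℝ (Fin n)) : ℂ :=
  ∫ x, Complex.exp (-2 * Real.pi * Complex.I * ((inner ℝ x ξ : ℝ) : ℂ)) * f x

/-!
Pairing `f` with the Gaussian `e^{-πt‖x‖²}` gives a function of `t > 0` whose Mellin transform at
`a` is `Γ(a) π^{-a} ∫ ‖x‖^{-2a} f(x) dx`. The Gaussian of parameter `t` has Fourier transform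
`t^{-d/2} e^{-π‖x‖²/t}`, so passing from `f` to `𝓕 f` amounts to `t ↦ t⁻¹` up to the factor
`t^{-d/2}`. On Mellin transforms this is the reflection `a ↦ d/2 - a`, and `a = -s` gives the
functional equation.
-/

open FourierTransform Module Set
open scoped ENNReal

section MellinLaplace

variable {a : ℂ} {r : ℝ}

lemma hasMellin_cexp_neg_mul (ha : 0 < a.re) (hr : 0 < r) :
    HasMellin (fun t : ℝ => Complex.exp (-(r * t))) a (Complex.Gamma a * (r : ℂ) ^ (-a)) := by
  have hexp : HasMellin (fun t : ℝ => Complex.exp (-t)) a (Complex.Gamma a) := by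
    have hcomm (t : ℝ) :
        (t : ℂ) ^ (a - 1) • Complex.exp (-t) = ↑(Real.exp (-t)) * (t : ℂ) ^ (a - 1) := by
      rw [smul_eq_mul, mul_comm, Complex.ofReal_exp, Complex.ofReal_neg]
    rw [HasMellin, MellinConvergent, mellin, Complex.Gamma_eq_integral ha, Complex.GammaIntegral]
    simpa only [hcomm, and_true] using Complex.GammaIntegral_convergent ha
  have hscale : (fun t : ℝ => Complex.exp (-(r * t)))
      = fun t : ℝ => Complex.exp (-((r * t : ℝ) : ℂ)) := by
    simp only [Complex.ofReal_mul]
  rw [hscale]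
  refine ⟨(MellinConvergent.comp_mul_left (f := fun t : ℝ => Complex.exp (-t)) hr).mpr hexp.1, ?_⟩
  rw [mellin_comp_mul_left (fun t : ℝ => Complex.exp (-t)) a hr, hexp.2, smul_eq_mul, mul_comm]

lemma integral_norm_cpow_smul_cexp_neg_mul (ha : 0 < a.re) (hr : 0 < r) :
    ∫ t in Ioi (0 : ℝ), ‖(t : ℂ) ^ (a - 1) • Complex.exp (-(r * t))‖
      = Real.Gamma a.re * ‖(r : ℂ) ^ (-a)‖ := by
  calc ∫ t in Ioi (0 : ℝ), ‖(t : ℂ) ^ (a - 1) • Complex.exp (-(r * t))‖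
      = ∫ t in Ioi (0 : ℝ), t ^ (a.re - 1) * Real.exp (-(r * t)) := by
        refine setIntegral_congr_fun measurableSet_Ioi fun t ht => ?_
        rw [norm_smul, Complex.norm_cpow_eq_rpow_re_of_pos ht, Complex.norm_exp]
        simp
    _ = Real.Gamma a.re * ‖(r : ℂ) ^ (-a)‖ := by
        rw [Real.integral_rpow_mul_exp_neg_mul_Ioi ha hr, Complex.norm_cpow_eq_rpow_re_of_pos hr,
          Complex.neg_re, Real.rpow_neg hr.le, one_div, Real.inv_rpow hr.le, mul_comm]

variable {X E : Type*} [MeasurableSpace X] {μ : Measure X} [SFinite μ]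
  [NormedAddCommGroup E] [NormedSpace ℂ E] {φ : X → ℝ} {f : X → E}

lemma integrable_cpow_smul_cexp_neg_mul_smul (hφ : AEMeasurable φ μ) (hφ_pos : ∀ᵐ x ∂μ, 0 < φ x)
    (hf : AEStronglyMeasurable f μ) (ha : 0 < a.re)
    (hint : Integrable (fun x => (φ x : ℂ) ^ (-a) • f x) μ) :
    Integrable (fun p : ℝ × X => (p.1 : ℂ) ^ (a - 1) • Complex.exp (-(φ p.2 * p.1)) • f p.2)
      ((volume.restrict (Ioi 0)).prod μ) := by
  have hmeas : AEStronglyMeasurable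
      (fun p : ℝ × X => (p.1 : ℂ) ^ (a - 1) • Complex.exp (-(φ p.2 * p.1)) • f p.2)
      ((volume.restrict (Ioi 0)).prod μ) := by
    have hφ_snd : AEMeasurable (fun p : ℝ × X => (φ p.2 : ℂ)) ((volume.restrict (Ioi 0)).prod μ) :=
      hφ.complex_ofReal.comp_snd
    have hexp : AEMeasurable (fun p : ℝ × X => Complex.exp (-(φ p.2 * p.1)))
        ((volume.restrict (Ioi 0)).prod μ) := (hφ_snd.mul (by fun_prop)).neg.cexp
    have hpow : Measurable fun p : ℝ × X => (p.1 : ℂ) ^ (a - 1) := by fun_prop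
    exact hpow.aestronglyMeasurable.smul (hexp.aestronglyMeasurable.smul hf.comp_snd)
  rw [integrable_prod_iff' hmeas]
  refine ⟨?_, (hint.norm.const_mul (Real.Gamma a.re)).congr ?_⟩
  · filter_upwards [hφ_pos] with x hx
    simpa only [smul_assoc] using! (hasMellin_cexp_neg_mul ha hx).1.smul_const (f x)
  · filter_upwards [hφ_pos] with x hx
    simp only [← smul_assoc _ _ (f x), norm_smul _ (f x)]
    rw [integral_mul_const, integral_norm_cpow_smul_cexp_neg_mul ha hx, mul_assoc]

theorem mellin_integral_cexp_neg_mul_smul [CompleteSpace E] (hφ : AEMeasurable φ μ)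
    (hφ_pos : ∀ᵐ x ∂μ, 0 < φ x) (hf : AEStronglyMeasurable f μ) (ha : 0 < a.re)
    (hint : Integrable (fun x => (φ x : ℂ) ^ (-a) • f x) μ) :
    mellin (fun t => ∫ x, Complex.exp (-(φ x * t)) • f x ∂μ) a
      = Complex.Gamma a • ∫ x, (φ x : ℂ) ^ (-a) • f x ∂μ := by
  calc mellin (fun t => ∫ x, Complex.exp (-(φ x * t)) • f x ∂μ) a
      = ∫ t in Ioi (0 : ℝ), ∫ x, (t : ℂ) ^ (a - 1) • Complex.exp (-(φ x * t)) • f x ∂μ := by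
        simp only [mellin, integral_smul]
    _ = ∫ x, (∫ t in Ioi (0 : ℝ), (t : ℂ) ^ (a - 1) • Complex.exp (-(φ x * t)) • f x) ∂μ :=
        integral_integral_swap (integrable_cpow_smul_cexp_neg_mul_smul hφ hφ_pos hf ha hint)
    _ = ∫ x, Complex.Gamma a • (φ x : ℂ) ^ (-a) • f x ∂μ := by
        refine integral_congr_ae ?_
        filter_upwards [hφ_pos] with x hx
        simp only [← smul_assoc _ _ (f x)]
        rw [integral_smul_const, smul_eq_mul (Complex.Gamma a), ← (hasMellin_cexp_neg_mul ha hx).2,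
          mellin]
    _ = Complex.Gamma a • ∫ x, (φ x : ℂ) ^ (-a) • f x ∂μ := integral_smul _ _

end MellinLaplace

section NormPower

variable {V E : Type*} [NormedAddCommGroup V] [NormedSpace ℝ V] [FiniteDimensional ℝ V]
  [MeasurableSpace V] [BorelSpace V] {μ : Measure V} [μ.IsAddHaarMeasure]
  [NormedAddCommGroup E] [NormedSpace ℂ E] {f : V → E} {c : ℂ}

lemma integrable_norm_cpow_smul (hf : Integrable f μ) (hf_top : MemLp f ∞ μ)
    (hc : -(finrank ℝ V : ℝ) < c.re) (hc_neg : c.re < 0) :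
    Integrable (fun x => (‖x‖ : ℂ) ^ c • f x) μ := by
  have hdim : 1 ≤ finrank ℝ V := by
    have : (0 : ℝ) < finrank ℝ V := by linarith
    exact_mod_cast this
  have hmeas : AEStronglyMeasurable (fun x : V => (‖x‖ : ℂ) ^ c) μ :=
    Measurable.aestronglyMeasurable (by fun_prop)
  have hnorm (x : V) : ‖(‖x‖ : ℂ) ^ c‖ = ‖x‖ ^ c.re :=
    Complex.norm_cpow_eq_rpow_re_of_nonneg (norm_nonneg x) hc_neg.ne
  have hball : IntegrableOn (fun x : V => (‖x‖ : ℂ) ^ c) (Metric.ball 0 1) μ :=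
    integrableOn_ball_of_norm_le_rpow (C := 1) (α := -c.re) hdim (by linarith)
      (.of_forall fun x => by rw [hnorm, neg_neg, one_mul]) hmeas
  have hcompl : ∀ᵐ x ∂μ.restrict (Metric.ball 0 1)ᶜ, ‖(‖x‖ : ℂ) ^ c‖ ≤ 1 := by
    filter_upwards [ae_restrict_mem measurableSet_ball.compl] with x hx
    rw [hnorm]
    exact Real.rpow_le_one_of_one_le_of_nonpos (by simpa using hx) hc_neg.le
  rw [← integrableOn_univ, ← union_compl_self (Metric.ball (0 : V) 1)]
  exact IntegrableOn.union (hball.smul_of_top_left (hf_top.restrict _))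
    (hf.integrableOn.bdd_smul 1 hmeas.restrict hcompl)

end NormPower

section Gaussian

variable {V : Type*} [NormedAddCommGroup V]

/-- The complex-valued Gaussian `v ↦ e^{-πt‖v‖²}`, a Laplace kernel in `t`; the exponent is grouped
as `(π‖v‖²) t` accordingly. -/
def gaussian (t : ℝ) (v : V) : ℂ := Complex.exp (-((π * ‖v‖ ^ 2 : ℝ) * t))

lemma gaussian_eq_cexp_neg_mul_sq (t : ℝ) :
    (gaussian t : V → ℂ) = fun v => Complex.exp (-((π * t : ℝ) : ℂ) * ‖v‖ ^ 2) := by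
  funext v
  rw [gaussian]
  congr 1
  push_cast
  ring

end Gaussian

lemma pi_mul_sq_cpow_neg {y : ℝ} (hy : 0 ≤ y) (a : ℂ) :
    ((π * y ^ 2 : ℝ) : ℂ) ^ (-a) = (π : ℂ) ^ (-a) * (y : ℂ) ^ (-2 * a) := by
  have hsq : (y : ℂ) ^ (2 * -a) = ((y : ℂ) ^ 2) ^ (-a) := by
    apply Complex.cpow_ofNat_mul' <;> simp [Complex.arg_ofReal_of_nonneg hy, pi_pos, pi_pos.le]
  rw [Complex.ofReal_mul, Complex.mul_cpow_ofReal_nonneg pi_pos.le (sq_nonneg y),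
    Complex.ofReal_pow, ← hsq, mul_neg, neg_mul]

section GaussianPairing

variable {V E : Type*} [NormedAddCommGroup V] [InnerProductSpace ℝ V] [FiniteDimensional ℝ V]
  [MeasurableSpace V] [BorelSpace V] [NormedAddCommGroup E] [NormedSpace ℂ E] {f : V → E}

/-- The pairing `t ↦ ∫ e^{-πt‖x‖²} f(x) dx` of `f` with the Gaussians, which plays the role of the
theta series of `f`. -/
def gaussianPairing (f : V → E) (t : ℝ) : E := ∫ x, gaussian t x • f x

lemma mellin_gaussianPairing [Nontrivial V] [CompleteSpace E] {a : ℂ}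
    (hf : AEStronglyMeasurable f) (ha : 0 < a.re)
    (hint : Integrable fun x => (‖x‖ : ℂ) ^ (-2 * a) • f x) :
    mellin (gaussianPairing f) a
      = (Complex.Gamma a * (π : ℂ) ^ (-a)) • ∫ x, (‖x‖ : ℂ) ^ (-2 * a) • f x := by
  have hpow (x : V) : ((π * ‖x‖ ^ 2 : ℝ) : ℂ) ^ (-a) • f x
      = (π : ℂ) ^ (-a) • (‖x‖ : ℂ) ^ (-2 * a) • f x := by
    rw [pi_mul_sq_cpow_neg (norm_nonneg x), mul_smul]
  have hpos : ∀ᵐ x : V, 0 < π * ‖x‖ ^ 2 := by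
    filter_upwards [Measure.ae_ne volume (0 : V)] with x hx
    positivity
  have hlaplace := mellin_integral_cexp_neg_mul_smul (φ := fun x : V => π * ‖x‖ ^ 2)
    (by fun_prop) hpos hf ha (by simpa only [hpow] using hint.fun_smul _)
  simp only [hpow, integral_smul] at hlaplace
  rw [mul_smul]
  exact hlaplace

lemma integrable_gaussian {t : ℝ} (ht : 0 < t) : Integrable (gaussian t : V → ℂ) := by
  have hb : 0 < ((π * t : ℝ) : ℂ).re := by
    rw [Complex.ofReal_re]
    positivity
  rw [gaussian_eq_cexp_neg_mul_sq]
  simpa using GaussianFourier.integrable_cexp_neg_mul_sq_norm_add hb 0 (0 : V)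

lemma fourier_gaussian_eq {t : ℝ} (ht : 0 < t) (w : V) :
    𝓕 (gaussian t : V → ℂ) w = (t : ℂ) ^ (-(finrank ℝ V / 2 : ℂ)) * gaussian t⁻¹ w := by
  have hb : 0 < ((π * t : ℝ) : ℂ).re := by
    rw [Complex.ofReal_re]
    positivity
  have hπ : (π : ℂ) ≠ 0 := Complex.ofReal_ne_zero.mpr pi_ne_zero
  have hbase : π / ((π * t : ℝ) : ℂ) = (t : ℂ)⁻¹ := by
    push_cast
    field_simp
  rw [gaussian_eq_cexp_neg_mul_sq, fourier_gaussian_innerProductSpace hb, hbase,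
    Complex.inv_cpow_ofReal_nonneg ht.le, ← Complex.cpow_neg, gaussian]
  congr 2
  push_cast
  field_simp

lemma gaussianPairing_fourier [CompleteSpace E] (hf : Integrable f) {t : ℝ} (ht : 0 < t) :
    gaussianPairing (𝓕 f) t = (t : ℂ) ^ (-(finrank ℝ V / 2 : ℂ)) • gaussianPairing f t⁻¹ := by
  calc gaussianPairing (𝓕 f) t
      = ∫ x, 𝓕 (gaussian t : V → ℂ) x • f x := by
        simpa using! (VectorFourier.integral_fourierIntegral_smul_eq_flip (L := innerₗ V)
          continuous_fourierChar continuous_inner (integrable_gaussian ht) hf).symm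
    _ = (t : ℂ) ^ (-(finrank ℝ V / 2 : ℂ)) • gaussianPairing f t⁻¹ := by
        simp only [fourier_gaussian_eq ht, mul_smul, integral_smul, gaussianPairing]

lemma mellin_gaussianPairing_fourier [CompleteSpace E] (hf : Integrable f) (a : ℂ) :
    mellin (gaussianPairing (𝓕 f)) a = mellin (gaussianPairing f) (finrank ℝ V / 2 - a) := by
  calc mellin (gaussianPairing (𝓕 f)) a
      = mellin (fun t => (t : ℂ) ^ (-(finrank ℝ V / 2 : ℂ)) • gaussianPairing f t⁻¹) a := by
        refine setIntegral_congr_fun measurableSet_Ioi fun t ht => ?_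
        rw [gaussianPairing_fourier hf ht]
    _ = mellin (gaussianPairing f) (finrank ℝ V / 2 - a) := by
        rw [mellin_cpow_smul, mellin_comp_inv, neg_add, neg_neg, neg_add_eq_sub]

end GaussianPairing

section FunctionalEquation

variable {V E : Type*} [NormedAddCommGroup V] [InnerProductSpace ℝ V] [FiniteDimensional ℝ V]
  [MeasurableSpace V] [BorelSpace V] [NormedAddCommGroup E] [NormedSpace ℂ E] {f : V → E} {s : ℂ}

lemma aestronglyMeasurable_fourier (hf : Integrable f) : AEStronglyMeasurable (𝓕 f) :=
  (VectorFourier.fourierIntegral_continuous continuous_fourierChar continuous_inner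
    hf).aestronglyMeasurable

lemma memLp_top_fourier (hf : Integrable f) : MemLp (𝓕 f) ∞ :=
  memLp_top_of_bound (aestronglyMeasurable_fourier hf) (∫ x, ‖f x‖)
    (.of_forall (VectorFourier.norm_fourierIntegral_le_integral_norm _ _ _ f))

lemma completed_zeta_functional_equation [Nontrivial V] [CompleteSpace E] {a : ℂ}
    (hf : Integrable f) (ha : 0 < a.re) (ha_lt : a.re < finrank ℝ V / 2)
    (hint_𝓕 : Integrable fun ξ => (‖ξ‖ : ℂ) ^ (-2 * a) • 𝓕 f ξ)
    (hint : Integrable fun x => (‖x‖ : ℂ) ^ (-2 * (finrank ℝ V / 2 - a)) • f x) :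
    (Complex.Gamma a * (π : ℂ) ^ (-a)) • ∫ ξ, (‖ξ‖ : ℂ) ^ (-2 * a) • 𝓕 f ξ
      = (Complex.Gamma (finrank ℝ V / 2 - a) * (π : ℂ) ^ (-(finrank ℝ V / 2 - a)))
        • ∫ x, (‖x‖ : ℂ) ^ (-2 * (finrank ℝ V / 2 - a)) • f x := by
  have hreflect : 0 < (finrank ℝ V / 2 - a).re := by
    simpa [← Complex.ofReal_natCast] using ha_lt
  rw [← mellin_gaussianPairing (aestronglyMeasurable_fourier hf) ha hint_𝓕,
    mellin_gaussianPairing_fourier hf, mellin_gaussianPairing hf.1 hreflect hint]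

lemma Gamma_mul_pi_cpow_neg_eq (d : ℂ) (hs_neg : s.re < 0) :
    Complex.Gamma (d / 2 + s) * (π : ℂ) ^ (-(d / 2 + s))
      = (Complex.Gamma (-s) * (π : ℂ) ^ s)
        * ((π : ℂ) ^ (-2 * s - d / 2) * (Complex.Gamma (s + d / 2) / Complex.Gamma (-s))) := by
  have hΓ : Complex.Gamma (-s) ≠ 0 := Complex.Gamma_ne_zero_of_re_pos (by simpa using hs_neg)
  have hexp : -(d / 2 + s) = s + (-2 * s - d / 2) := by ring
  rw [hexp, Complex.cpow_add _ _ (Complex.ofReal_ne_zero.mpr pi_ne_zero), add_comm s]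
  field_simp

theorem zeta_functional_equation_euclidean_general [CompleteSpace E] (hf : Integrable f)
    (hf_top : MemLp f ∞) (h𝓕f : Integrable (𝓕 f))
    (hs : -(finrank ℝ V / 2 : ℝ) < s.re) (hs_neg : s.re < 0) :
    Integrable (fun ξ => (‖ξ‖ : ℂ) ^ (2 * s) • 𝓕 f ξ)
    ∧ Integrable (fun x => (‖x‖ : ℂ) ^ (-2 * s - finrank ℝ V) • f x)
    ∧ ∫ ξ, (‖ξ‖ : ℂ) ^ (2 * s) • 𝓕 f ξ
      = ((π : ℂ) ^ (-2 * s - finrank ℝ V / 2)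
          * (Complex.Gamma (s + finrank ℝ V / 2) / Complex.Gamma (-s)))
        • ∫ x, (‖x‖ : ℂ) ^ (-2 * s - finrank ℝ V) • f x := by
  have hdim : (0 : ℝ) < finrank ℝ V := by linarith
  have : Nontrivial V := nontrivial_of_finrank_pos (R := ℝ) (by exact_mod_cast hdim)
  have hre_𝓕 : (2 * s).re = 2 * s.re := by simp
  have hre : (-2 * s - finrank ℝ V).re = -2 * s.re - finrank ℝ V := by simp
  have hint_𝓕 : Integrable fun ξ => (‖ξ‖ : ℂ) ^ (2 * s) • 𝓕 f ξ :=
    integrable_norm_cpow_smul h𝓕f (memLp_top_fourier hf) (by linarith) (by linarith)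
  have hint : Integrable fun x => (‖x‖ : ℂ) ^ (-2 * s - finrank ℝ V) • f x :=
    integrable_norm_cpow_smul hf hf_top (by linarith) (by linarith)
  refine ⟨hint_𝓕, hint, ?_⟩
  have hexp_𝓕 : -2 * -s = 2 * s := by ring
  have hexp : -2 * (finrank ℝ V / 2 + s) = -2 * s - finrank ℝ V := by ring
  have hcompleted := completed_zeta_functional_equation hf (a := -s) (by simpa)
    (by rw [Complex.neg_re]; linarith) (by simpa only [hexp_𝓕] using hint_𝓕)
    (by simpa only [sub_neg_eq_add, hexp] using hint)
  have hfactor : Complex.Gamma (-s) * (π : ℂ) ^ s ≠ 0 :=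
    mul_ne_zero (Complex.Gamma_ne_zero_of_re_pos (by simpa))
      (Complex.cpow_ne_zero_iff.mpr (.inl (Complex.ofReal_ne_zero.mpr pi_ne_zero)))
  refine smul_right_injective E hfactor ?_
  simpa only [hexp_𝓕, sub_neg_eq_add, hexp, neg_neg, Gamma_mul_pi_cpow_neg_eq _ hs_neg,
    mul_smul] using hcompleted

end FunctionalEquation

lemma fourierTr_eq_fourier {n : ℕ} (f : EuclideanSpace ℝ (Fin n) → ℂ) : fourierTr f = 𝓕 f := by
  funext ξ
  rw [fourierTr, Real.fourier_eq']
  congr 1 with x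
  rw [smul_eq_mul]
  congr 2
  push_cast
  ring

/-- Local zeta functional equation for the positive definite case `V = ℝ^{n,0}`:
for a Schwartz function `f` and `−n/2 < Re s < 0`, both zeta integrals converge
absolutely and
`∫ 𝓕f(ξ)‖ξ‖^{2s} dξ = π^{−2s−n/2} (Γ(s+n/2)/Γ(−s)) ∫ f(x)‖x‖^{−2s−n} dx`. -/
theorem zeta_functional_equation_euclidean (n : ℕ) (hn : 1 ≤ n)
    (f : SchwartzMap (EuclideanSpace ℝ (Fin n)) ℂ) (s : ℂ)
    (h₁ : -(n / 2 : ℝ) < s.re) (h₂ : s.re < 0) :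
    Integrable (fun ξ : EuclideanSpace ℝ (Fin n) =>
        fourierTr (fun x => f x) ξ * ((‖ξ‖ : ℂ) ^ (2 * s)))
    ∧ Integrable (fun x : EuclideanSpace ℝ (Fin n) =>
        f x * ((‖x‖ : ℂ) ^ (-2 * s - n)))
    ∧ (∫ ξ : EuclideanSpace ℝ (Fin n), fourierTr (fun x => f x) ξ * ((‖ξ‖ : ℂ) ^ (2 * s)))
      = (Real.pi : ℂ) ^ (-2 * s - n / 2)
          * (Complex.Gamma (s + n / 2) / Complex.Gamma (-s))
          * ∫ x : EuclideanSpace ℝ (Fin n), f x * ((‖x‖ : ℂ) ^ (-2 * s - n)) := by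
  simpa only [fourierTr_eq_fourier, SchwartzMap.fourier_coe, finrank_euclideanSpace_fin,
    smul_eq_mul, mul_comm (Complex.ofReal _ ^ (_ : ℂ))] using
    zeta_functional_equation_euclidean_general f.integrable f.memLp_top
      (f.fourier_coe ▸ (𝓕 f).integrable) (by simpa using h₁) h₂
end
end

section
/- Invariance of the rank under complexification (Proposition B.1): Let 𝕍 be a nonzero finite-dimensional complex vector space endowed with a ℂ-bilinear commutative multiplication (x,y) ↦ x∘y which has a unit element e (e∘x = x for all x) and satisfies the Jordan identity (x∘y)∘(x∘x) = x∘(y∘(x∘x)) for all x, y. Let V ⊆ 𝕍 be a real subspace with e ∈ V, closed under the multiplication (V∘V ⊆ V), and such that every z ∈ 𝕍 can be written uniquely as z = x + i·y with x, y ∈ V (V is a real form of 𝕍). Define powers by x⁰ = e and x^{k+1} = x∘x^k. For x ∈ V let rk_ℝ(x) = min{ k ≥ 1 : e, x, x², …, x^k are linearly dependent over ℝ }, and for z ∈ 𝕍 let rk_ℂ(z) = min{ k ≥ 1 : e, z, z², …, z^k are linearly dependent over ℂ }. Then max_{x ∈ V} rk_ℝ(x) = max_{z ∈ 𝕍} rk_ℂ(z).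 -/
noncomputable section

/-- Jordan powers: `x⁰ = e`, `x^{k+1} = x ∘ x^k`. -/
def jpow {𝕍 : Type*} [AddCommGroup 𝕍] [Module ℂ 𝕍]
    (m : 𝕍 →ₗ[ℂ] 𝕍 →ₗ[ℂ] 𝕍) (e : 𝕍) (x : 𝕍) : ℕ → 𝕍
  | 0 => e
  | k + 1 => m x (jpow m e x k)

/-- The rank of an element over a field `𝕜`: the least `k ≥ 1` such that
`e, x, x², …, x^k` are linearly dependent over `𝕜`. -/
def elemRank (𝕜 : Type*) [Field 𝕜] {𝕍 : Type*} [AddCommGroup 𝕍] [Module ℂ 𝕍] [Module 𝕜 𝕍]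
    (m : 𝕍 →ₗ[ℂ] 𝕍 →ₗ[ℂ] 𝕍) (e : 𝕍) (x : 𝕍) : ℕ :=
  sInf {k : ℕ | 1 ≤ k ∧ ¬ LinearIndependent 𝕜 (fun i : Fin (k + 1) => jpow m e x (i : ℕ))}

/-!
Fix `x, y ∈ V`. Each power of `x + t • y` is a polynomial in `t ∈ ℂ`, so linear independence of the
first `n` powers at one value of `t` persists for all but finitely many `t`. The value `t = i` gives
an arbitrary element of `𝕍`, the real values give elements of `V`: hence independent powers over
`ℂ` somewhere in `𝕍` yield independent powers over `ℂ` somewhere in `V`. On vectors of `V`,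
independence over `ℂ` and over `ℝ` agree because `V ∩ iV = 0`.
-/

section PolynomialFamily

variable {K M ι : Type*} [Field K] [AddCommGroup M] [Module K M] [Finite ι]

theorem finite_setOf_not_linearIndependent_eval (P : ι → PolynomialModule K M) {t₀ : K}
    (h : LinearIndependent K fun i => PolynomialModule.eval t₀ (P i)) :
    {t | ¬ LinearIndependent K fun i => PolynomialModule.eval t (P i)}.Finite := by
  classical
  cases nonempty_fintype ι
  obtain ⟨g, hg⟩ := LinearMap.exists_leftInverse_of_injective _
    (LinearMap.ker_eq_bot.2 h.fintypeLinearCombination_injective)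
  -- `g` sends the family at `t₀` to the standard basis, so the determinant of the coordinates of
  -- the family at `t` is a polynomial in `t` with value `1` at `t₀`.
  let A : Matrix ι ι (Polynomial K) := Matrix.of fun i j =>
    PolynomialModule.equivPolynomialSelf (PolynomialModule.map K (LinearMap.proj j ∘ₗ g) (P i))
  have eval_A (t : K) : A.map (Polynomial.eval t) =
      Matrix.of fun i => g (PolynomialModule.eval t (P i)) := by
    ext i j
    simpa [A, ← Polynomial.coe_aeval_eq_eval, PolynomialModule.aeval_equivPolynomial] using
      PolynomialModule.eval_map K (LinearMap.proj j ∘ₗ g) (P i) t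
  have eval_det (t : K) : A.det.eval t = (A.map (Polynomial.eval t)).det :=
    (Polynomial.evalRingHom t).map_det A
  have eval_A_t₀ : A.map (Polynomial.eval t₀) = 1 := by
    rw [eval_A]
    ext i j
    simpa [Matrix.one_apply, Pi.single_apply, eq_comm] using
      congrFun (LinearMap.congr_fun hg (Pi.single i 1)) j
  have det_ne_zero : A.det ≠ 0 := fun h0 => by
    simpa [h0, eval_A_t₀] using eval_det t₀
  refine (Polynomial.finite_setOfPred_isRoot det_ne_zero).subset fun t ht => ?_
  by_contra hroot
  have det_eval_ne_zero : (Matrix.of fun i => g (PolynomialModule.eval t (P i))).det ≠ 0 := by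
    rwa [← eval_A, ← eval_det]
  exact ht (.of_comp g (Matrix.linearIndependent_rows_of_det_ne_zero det_eval_ne_zero))

end PolynomialFamily

section TotallyReal

variable {𝕍 ι : Type*} [AddCommGroup 𝕍] [Module ℂ 𝕍]

/-- A real subspace `V` of a complex vector space is totally real if `V ∩ iV = 0`. Together with
`V + iV = 𝕍`, this says that `V` is a real form of `𝕍`. -/
def IsTotallyReal (V : Submodule ℝ 𝕍) : Prop :=
  ∀ x ∈ V, Complex.I • x ∈ V → x = 0

theorem isTotallyReal_of_existsUnique {V : Submodule ℝ 𝕍}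
    (h : ∀ z : 𝕍, ∃! xy : V × V, z = (xy.1 : 𝕍) + Complex.I • (xy.2 : 𝕍)) :
    IsTotallyReal V := by
  intro x hx hIx
  have heq := (h (Complex.I • x)).unique (y₁ := (0, ⟨x, hx⟩)) (y₂ := (⟨_, hIx⟩, 0))
    (by simp) (by simp)
  exact congrArg (fun xy : V × V => (xy.2 : 𝕍)) heq

theorem IsTotallyReal.linearIndependent_complex_iff {V : Submodule ℝ 𝕍} (hV : IsTotallyReal V)
    {v : ι → 𝕍} (hv : ∀ i, v i ∈ V) :
    LinearIndependent ℂ v ↔ LinearIndependent ℝ v := by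
  refine ⟨fun h => h.restrict_scalars' ℝ, fun h => ?_⟩
  rw [linearIndependent_iff'] at h ⊢
  intro s c hc
  set a := ∑ i ∈ s, (c i).re • v i with ha
  set b := ∑ i ∈ s, (c i).im • v i with hb
  have haV : a ∈ V := V.sum_mem fun i _ => V.smul_mem _ (hv i)
  have hbV : b ∈ V := V.sum_mem fun i _ => V.smul_mem _ (hv i)
  have hab : a + Complex.I • b = 0 := by
    rw [← hc, ha, hb, Finset.smul_sum, ← Finset.sum_add_distrib]
    refine Finset.sum_congr rfl fun i _ => ?_
    conv_rhs => rw [← Complex.re_add_im (c i)]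
    rw [add_smul, mul_comm, mul_smul, Complex.coe_smul, Complex.coe_smul]
  have hb0 : b = 0 := hV b hbV (eq_neg_of_add_eq_zero_right hab ▸ V.neg_mem haV)
  have ha0 : a = 0 := by simpa [hb0] using hab
  exact fun i hi => Complex.ext (h s _ ha0 i hi) (h s _ hb0 i hi)

end TotallyReal

section JordanPowers

variable {𝕍 : Type*} [AddCommGroup 𝕍] [Module ℂ 𝕍] {m : 𝕍 →ₗ[ℂ] 𝕍 →ₗ[ℂ] 𝕍} {e : 𝕍}

theorem jpow_mem {V : Submodule ℝ 𝕍} (heV : e ∈ V) (hmul : ∀ x ∈ V, ∀ y ∈ V, m x y ∈ V)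
    {x : 𝕍} (hx : x ∈ V) : ∀ k, jpow m e x k ∈ V
  | 0 => heV
  | k + 1 => hmul x hx _ (jpow_mem heV hmul hx k)

theorem exists_polynomialModule_eval_eq_jpow (m : 𝕍 →ₗ[ℂ] 𝕍 →ₗ[ℂ] 𝕍) (e x y : 𝕍) (k : ℕ) :
    ∃ P : PolynomialModule ℂ 𝕍, ∀ t, PolynomialModule.eval t P = jpow m e (x + t • y) k := by
  induction k with
  | zero => exact ⟨PolynomialModule.single ℂ 0 e, fun t => by simp [jpow]⟩
  | succ k ih =>
    obtain ⟨P, hP⟩ := ih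
    refine ⟨PolynomialModule.map ℂ (m x) P +
      (Polynomial.X : Polynomial ℂ) • PolynomialModule.map ℂ (m y) P, fun t => ?_⟩
    simp [jpow, PolynomialModule.eval_map', hP]

theorem exists_ofReal_linearIndependent_jpow {x y : 𝕍} {n : ℕ} {t₀ : ℂ}
    (h : LinearIndependent ℂ fun i : Fin n => jpow m e (x + t₀ • y) i) :
    ∃ t : ℝ, LinearIndependent ℂ fun i : Fin n => jpow m e (x + (t : ℂ) • y) i := by
  choose P hP using exists_polynomialModule_eval_eq_jpow m e x y
  simp only [← hP] at h ⊢
  have hfinite := (finite_setOf_not_linearIndependent_eval (fun i : Fin n => P i) h).preimage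
    Complex.ofReal_injective.injOn
  obtain ⟨t, ht⟩ := hfinite.exists_notMem
  exact ⟨t, not_not.1 ht⟩

theorem exists_mem_linearIndependent_jpow_iff {V : Submodule ℝ 𝕍}
    (heV : e ∈ V) (hmul : ∀ x ∈ V, ∀ y ∈ V, m x y ∈ V)
    (hrealform : ∀ z : 𝕍, ∃! xy : V × V, z = (xy.1 : 𝕍) + Complex.I • (xy.2 : 𝕍)) (n : ℕ) :
    (∃ x ∈ V, LinearIndependent ℝ fun i : Fin n => jpow m e x i) ↔
      ∃ z, LinearIndependent ℂ fun i : Fin n => jpow m e z i := by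
  have complex_iff {x : 𝕍} (hx : x ∈ V) :=
    (isTotallyReal_of_existsUnique hrealform).linearIndependent_complex_iff
      fun i : Fin n => jpow_mem heV hmul hx i
  constructor
  · rintro ⟨x, hx, h⟩
    exact ⟨x, (complex_iff hx).2 h⟩
  · rintro ⟨z, h⟩
    obtain ⟨⟨x, y⟩, rfl, -⟩ := hrealform z
    obtain ⟨t, ht⟩ := exists_ofReal_linearIndependent_jpow h
    have hmem : (x : 𝕍) + (t : ℂ) • (y : 𝕍) ∈ V := by
      rw [Complex.coe_smul]
      exact V.add_mem x.2 (V.smul_mem t y.2)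
    exact ⟨_, hmem, (complex_iff hmem).1 ht⟩

theorem not_linearIndependent_jpow_of_le {𝕜 : Type*} [Field 𝕜] [Module 𝕜 𝕍] {x : 𝕍} {k l : ℕ}
    (hkl : k ≤ l) (hk : ¬ LinearIndependent 𝕜 fun i : Fin k => jpow m e x i) :
    ¬ LinearIndependent 𝕜 fun i : Fin l => jpow m e x i :=
  fun hl => hk (hl.comp (Fin.castLE hkl) (Fin.castLE_injective hkl))

theorem elemRank_le_iff {𝕜 : Type*} [Field 𝕜] [Module 𝕜 𝕍] {x : 𝕍} {n : ℕ}
    (hdep : ∃ k, ¬ LinearIndependent 𝕜 fun i : Fin k => jpow m e x i) :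
    elemRank 𝕜 m e x ≤ n ↔
      1 ≤ n ∧ ¬ LinearIndependent 𝕜 fun i : Fin (n + 1) => jpow m e x i := by
  refine ⟨fun hle => ?_, fun h => Nat.sInf_le h⟩
  obtain ⟨k, hk⟩ := hdep
  obtain ⟨one_le, hrank⟩ : elemRank 𝕜 m e x ∈
      {k : ℕ | 1 ≤ k ∧ ¬ LinearIndependent 𝕜 fun i : Fin (k + 1) => jpow m e x i} :=
    Nat.sInf_mem ⟨k + 1, by omega, not_linearIndependent_jpow_of_le (by omega) hk⟩
  exact ⟨one_le.trans hle, not_linearIndependent_jpow_of_le (by omega) hrank⟩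

end JordanPowers

/-- For a vector `e` other than a unit, `jpow m e x` is the Krylov sequence of `m x` at `e`. The
hypothesis `hbdd` says that the maximum over `V` exists; it holds for example in spin factors of
infinite dimension, where every element has rank at most two. -/
theorem rank_invariance_complexification_general
    {𝕍 : Type*} [AddCommGroup 𝕍] [Module ℂ 𝕍] {m : 𝕍 →ₗ[ℂ] 𝕍 →ₗ[ℂ] 𝕍} {e : 𝕍}
    {V : Submodule ℝ 𝕍} (heV : e ∈ V) (hmul : ∀ x ∈ V, ∀ y ∈ V, m x y ∈ V)
    (hrealform : ∀ z : 𝕍, ∃! xy : V × V, z = (xy.1 : 𝕍) + Complex.I • (xy.2 : 𝕍))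
    (hbdd : ∃ n, ∀ x ∈ V, ¬ LinearIndependent ℝ fun i : Fin n => jpow m e x i) :
    sSup {k : ℕ | ∃ x ∈ V, k = elemRank ℝ m e x}
      = sSup {k : ℕ | ∃ z : 𝕍, k = elemRank ℂ m e z} := by
  have dependent_iff (n : ℕ) :
      (∀ x ∈ V, ¬ LinearIndependent ℝ fun i : Fin n => jpow m e x i) ↔
        ∀ z, ¬ LinearIndependent ℂ fun i : Fin n => jpow m e z i := by
    simpa using not_congr (exists_mem_linearIndependent_jpow_iff heV hmul hrealform n)
  obtain ⟨N, hN⟩ := hbdd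
  have real_le_iff {x : 𝕍} (hx : x ∈ V) (n : ℕ) := elemRank_le_iff (n := n) ⟨N, hN x hx⟩
  have complex_le_iff (z : 𝕍) (n : ℕ) :=
    elemRank_le_iff (n := n) ⟨N, (dependent_iff N).1 hN z⟩
  have upperBounds_eq : upperBounds {k : ℕ | ∃ x ∈ V, k = elemRank ℝ m e x} =
      upperBounds {k : ℕ | ∃ z : 𝕍, k = elemRank ℂ m e z} := by
    ext n
    constructor
    · rintro h _ ⟨z, rfl⟩
      have hn {x : 𝕍} (hx : x ∈ V) := (real_le_iff hx n).1 (h ⟨x, hx, rfl⟩)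
      exact (complex_le_iff z n).2 ⟨(hn heV).1, (dependent_iff _).1 (fun x hx => (hn hx).2) z⟩
    · rintro h _ ⟨x, hx, rfl⟩
      have hn (z : 𝕍) := (complex_le_iff z n).1 (h ⟨z, rfl⟩)
      exact (real_le_iff hx n).2 ⟨(hn e).1, (dependent_iff _).2 (fun z => (hn z).2) x hx⟩
  have bddAbove : BddAbove {k : ℕ | ∃ z : 𝕍, k = elemRank ℂ m e z} := by
    refine ⟨N + 1, ?_⟩
    rintro _ ⟨z, rfl⟩
    exact (complex_le_iff z _).2
      ⟨by omega, not_linearIndependent_jpow_of_le (by omega) ((dependent_iff N).1 hN z)⟩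
  exact ((isLUB_congr upperBounds_eq).2 (isLUB_csSup ⟨_, e, rfl⟩ bddAbove)).csSup_eq
    ⟨_, e, heV, rfl⟩

/-- Invariance of the rank under complexification (Proposition B.1): if `V` is a real
form of a finite-dimensional unital complex Jordan algebra `𝕍`, then
`max_{x∈V} rk_ℝ(x) = max_{z∈𝕍} rk_ℂ(z)`. -/
theorem rank_invariance_complexification
    (𝕍 : Type*) [AddCommGroup 𝕍] [Module ℂ 𝕍] [FiniteDimensional ℂ 𝕍] [Nontrivial 𝕍]
    (m : 𝕍 →ₗ[ℂ] 𝕍 →ₗ[ℂ] 𝕍) (e : 𝕍)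
    (hcomm : ∀ x y : 𝕍, m x y = m y x)
    (hunit : ∀ x : 𝕍, m e x = x)
    (hjordan : ∀ x y : 𝕍, m (m x y) (m x x) = m x (m y (m x x)))
    (V : Submodule ℝ 𝕍)
    (heV : e ∈ V)
    (hmul : ∀ x ∈ V, ∀ y ∈ V, m x y ∈ V)
    (hrealform : ∀ z : 𝕍, ∃! xy : V × V, z = (xy.1 : 𝕍) + Complex.I • (xy.2 : 𝕍)) :
    sSup {k : ℕ | ∃ x ∈ V, k = elemRank ℝ m e x}
      = sSup {k : ℕ | ∃ z : 𝕍, k = elemRank ℂ m e z} := by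
  have : FiniteDimensional ℝ 𝕍 := FiniteDimensional.complexToReal 𝕍
  exact rank_invariance_complexification_general heV hmul hrealform
    ⟨Module.finrank ℝ 𝕍 + 1, fun x _ h => by simpa using h.fintype_card_le_finrank⟩
end
end
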